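/- arXiv:2603.23238 — 4 statements merged into one kernel-verified Lean document; each statement's English description precedes it below -/
import Mathlib

section
/- (Flat-point estimate, Denjoy–Carleman case) Let M = (M_n)_{n≥0} be a log-convex positive sequence with M_0 = 1, μ_n := M_n/M_{n−1}, and T_M(N) := ∑_{j≥N} 1/μ_j. Let φ belong to the Denjoy–Carleman class C_M([-1,1]) and be flat at 0 (φ^{(n)}(0) = 0 for all n ≥ 0). Then there exist constants C, c > 0 and δ ∈ (0,1) such that for every t with 0 < |t| ≤ δ and every integer N ≥ 1 with T_M(N) ≥ c·|t| (in particular whenever T_M(N) = ∞), one has |φ(t)| ≤ C·2^{−N}. -/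
/-!
The proof is Bang's argument. Write `W n = K ^ n * M n`, so that `|φ⁽ⁿ⁾| ≤ K * W n`, and consider,
for a level `N`, the property
  `|φ⁽ⁿ⁾(x)| ≤ K * 2 ^ n * W n / 2 ^ N` for all `n`.
It is automatic for `n ≥ N`, and it holds at `x = 0` for every `N` by flatness. Log-convexity says
that `W n / W (n + 1)` decreases, and this yields a propagation estimate (`bang_step`): if level
`N + 1` holds at `a`, then level `N` holds on `[a, a + W N / (4 * W (N + 1))]`. Chaining these
intervals from level `N + p` at `0` down to level `N` gives level `N` on an interval of length
`(1/4) * ∑_{i < p} W (N + i) / W (N + i + 1)` (`bang_chain`), that is, a multiple of a partial sum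
of the series `T_M(N + 1)`. Level `N` with `n = 0` is the desired bound. Negative `t` are handled
by reflection.
-/

/-- If the level-`(N + 1)` bounds hold at `a`, the level-`N` bounds hold on an interval of length
`W N / (4 * W (N + 1))` to the right of `a`. For `n ≤ N + 1` one proves by descending induction on
`n` the bound with an extra factor `exp (2 * (W (N + 1) / W N) * (y - a))`, which is at most `2`
on that interval. -/
lemma bang_step (W : ℕ → ℝ) (K : ℝ) (hK : 0 < K) (hW : ∀ n, 0 < W n)
    (hr : Antitone fun n => W n / W (n + 1)) (F : ℕ → ℝ → ℝ)
    (hF : ∀ n, ∀ x ∈ Set.Icc (0 : ℝ) 1, HasDerivWithinAt (F n) (F (n + 1) x) (Set.Icc 0 1) x)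
    (hb : ∀ n, ∀ x ∈ Set.Icc (0 : ℝ) 1, |F n x| ≤ K * W n)
    (N : ℕ) (a : ℝ) (ha : 0 ≤ a)
    (hFa : ∀ n, |F n a| ≤ K * (2 ^ n * W n) / 2 ^ (N + 1))
    (y : ℝ) (hay : a ≤ y) (hy1 : y ≤ 1) (hya : y - a ≤ W N / W (N + 1) / 4) (n : ℕ) :
    |F n y| ≤ K * (2 ^ n * W n) / 2 ^ N := by
  have key : ∀ d n, n + d = N + 1 → ∀ z ∈ Set.Icc a y,
      |F n z| ≤ K * (2 ^ n * W n) / 2 ^ (N + 1) *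
        Real.exp (2 * (W (N + 1) / W N) * (z - a)) := by
    intro d
    induction d with
    | zero =>
      intro n hn z hz
      obtain rfl : n = N + 1 := by omega
      have h1 := hb (N + 1) z ⟨ha.trans hz.1, hz.2.trans hy1⟩
      have h2 : K * (2 ^ (N + 1) * W (N + 1)) / 2 ^ (N + 1) = K * W (N + 1) := by field_simp
      rw [h2]
      refine h1.trans (le_mul_of_one_le_right (mul_pos hK (hW _)).le (Real.one_le_exp ?_))
      have := (div_pos (hW (N + 1)) (hW N)).le
      have := hz.1
      apply mul_nonneg <;> linarith
    | succ d ih =>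
      intro n hn z hz
      have ih' := ih (n + 1) (by omega)
      have hsub : Set.Icc a y ⊆ Set.Icc (0 : ℝ) 1 := Set.Icc_subset_Icc ha hy1
      set μ := W (N + 1) / W N with hμ
      set A := K * (2 ^ n * W n) / 2 ^ (N + 1) with hA
      have hApos : 0 < A := by have := hW n; positivity
      have hWn : W (n + 1) ≤ μ * W n := by
        have h := hr (show n ≤ N by omega)
        simp only at h
        rw [div_le_div_iff₀ (hW _) (hW _)] at h
        rw [hμ, div_mul_eq_mul_div, le_div_iff₀ (hW N)]
        linarith
      have hB : ∀ x, HasDerivAt (fun z => A * Real.exp (2 * μ * (z - a)))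
          (A * (Real.exp (2 * μ * (x - a)) * (2 * μ))) x := by
        intro x
        have h1 : HasDerivAt (fun z : ℝ => 2 * μ * (z - a)) (2 * μ) x := by
          simpa using ((hasDerivAt_id x).sub_const a).const_mul (2 * μ)
        exact (h1.exp).const_mul A
      have := image_norm_le_of_norm_deriv_right_le_deriv_boundary (f := F n) (f' := F (n + 1))
        (a := a) (b := y) (B := fun z => A * Real.exp (2 * μ * (z - a)))
        (fun x hx => ((hF n x (hsub hx)).mono hsub).continuousWithinAt)
        (fun x hx => by
          have h1 := (hF n x (hsub ⟨hx.1, hx.2.le⟩)).mono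
            (Set.Icc_subset_Icc (ha.trans hx.1) hy1)
          exact h1.mono_of_mem_nhdsWithin (Icc_mem_nhdsGE hx.2))
        (by simpa using hFa n) hB
        (fun x hx => by
          refine (ih' x ⟨hx.1, hx.2.le⟩).trans ?_
          have h3 : K * (2 ^ (n + 1) * W (n + 1)) / 2 ^ (N + 1) ≤ A * (2 * μ) := by
            rw [hA, div_mul_eq_mul_div]
            refine div_le_div_of_nonneg_right ?_ (by positivity)
            have : K * 2 ^ (n + 1) * W (n + 1) ≤ K * 2 ^ (n + 1) * (μ * W n) :=
              mul_le_mul_of_nonneg_left hWn (by positivity)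
            calc _ = K * 2 ^ (n + 1) * W (n + 1) := by ring
              _ ≤ _ := this
              _ = _ := by ring
          calc _ ≤ A * (2 * μ) * Real.exp (2 * μ * (x - a)) :=
                mul_le_mul_of_nonneg_right h3 (Real.exp_pos _).le
            _ = _ := by ring) hz
      simpa using this
  have hWn := hW n
  rcases le_total n (N + 1) with hn | hn
  · have h1 := key (N + 1 - n) n (by omega) y ⟨hay, le_rfl⟩
    have h2 : Real.exp (2 * (W (N + 1) / W N) * (y - a)) ≤ 2 := by
      have h3 : 2 * (W (N + 1) / W N) * (y - a) ≤ 1 / 2 := by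
        have hp := hW N
        have hq := hW (N + 1)
        calc _ ≤ 2 * (W (N + 1) / W N) * (W N / W (N + 1) / 4) :=
              mul_le_mul_of_nonneg_left hya (by positivity)
          _ = 1 / 2 := by field_simp; norm_num
      have h4 : Real.exp (1 / 2) ≤ 2 := by
        rw [← Real.le_log_iff_exp_le (by norm_num)]
        linarith [Real.log_two_gt_d9]
      exact (Real.exp_le_exp.2 h3).trans h4
    calc _ ≤ _ := h1
      _ ≤ K * (2 ^ n * W n) / 2 ^ (N + 1) * 2 := mul_le_mul_of_nonneg_left h2 (by positivity)
      _ = _ := by rw [pow_succ 2 N]; field_simp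
  · refine (hb n y ⟨ha.trans hay, hy1⟩).trans ?_
    rw [le_div_iff₀ (by positivity)]
    have : (2 : ℝ) ^ N ≤ 2 ^ n := pow_le_pow_right₀ (by norm_num) (by omega)
    calc K * W n * 2 ^ N ≤ K * W n * 2 ^ n := mul_le_mul_of_nonneg_left this (by positivity)
      _ = _ := by ring

/-- Flatness at `0` gives level `N + p` there, and `p` applications of `bang_step` lead down to
level `N` at `x`. -/
lemma bang_chain (W : ℕ → ℝ) (K : ℝ) (hK : 0 < K) (hW : ∀ n, 0 < W n)
    (hr : Antitone fun n => W n / W (n + 1)) (F : ℕ → ℝ → ℝ)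
    (hF : ∀ n, ∀ x ∈ Set.Icc (0 : ℝ) 1, HasDerivWithinAt (F n) (F (n + 1) x) (Set.Icc 0 1) x)
    (hb : ∀ n, ∀ x ∈ Set.Icc (0 : ℝ) 1, |F n x| ≤ K * W n)
    (h0 : ∀ n, F n 0 = 0) (p : ℕ) :
    ∀ N : ℕ, ∀ x : ℝ, 0 ≤ x → x ≤ 1 →
      x ≤ ∑ i ∈ Finset.range p, W (N + i) / W (N + i + 1) / 4 →
      ∀ n, |F n x| ≤ K * (2 ^ n * W n) / 2 ^ N := by
  induction p with
  | zero =>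
    intro N x hx _ hxs n
    obtain rfl : x = 0 := le_antisymm (by simpa using hxs) hx
    rw [h0, abs_zero]
    have := hW n
    positivity
  | succ p ih =>
    intro N x hx hx1 hxs n
    rw [Finset.sum_range_succ'] at hxs
    have hS : ∑ i ∈ Finset.range p, W (N + (i + 1)) / W (N + (i + 1) + 1) / 4 =
        ∑ i ∈ Finset.range p, W (N + 1 + i) / W (N + 1 + i + 1) / 4 := by
      refine Finset.sum_congr rfl fun i _ => ?_
      rw [show N + (i + 1) = N + 1 + i by ring]
    rw [hS] at hxs
    set S := ∑ i ∈ Finset.range p, W (N + 1 + i) / W (N + 1 + i + 1) / 4 with hSdef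
    have hS0 : 0 ≤ S := Finset.sum_nonneg fun i _ => by
      have := hW (N + 1 + i)
      have := hW (N + 1 + i + 1)
      positivity
    -- The starting point of the last step, truncated so that it does not pass `x`.
    exact bang_step W K hK hW hr F hF hb N (min S x) (le_min hS0 hx)
      (ih (N + 1) _ (le_min hS0 hx) ((min_le_right _ _).trans hx1) (min_le_left _ _))
      x (min_le_right _ _) hx1 (by
        have := hW N
        have := hW (N + 1)
        have h5 : 0 ≤ W N / W (N + 1) / 4 := by positivity
        simp only [add_zero] at hxs
        rcases min_cases S x with ⟨h, _⟩ | ⟨h, _⟩ <;> rw [h] <;> linarith) n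

theorem stmt_12 (M : ℕ → ℝ) (hMpos : ∀ n, 0 < M n) (hM0 : M 0 = 1)
    (hlc : ∀ n : ℕ, 1 ≤ n → M n ^ 2 ≤ M (n-1) * M (n+1))
    (φ : ℝ → ℝ) (hφ : ContDiffOn ℝ (⊤ : ℕ∞) φ (Set.Icc (-1) 1))
    (hDC : ∃ K > (0:ℝ), ∀ n : ℕ, ∀ t ∈ Set.Icc (-1:ℝ) 1,
      |iteratedDerivWithin n φ (Set.Icc (-1) 1) t| ≤ K ^ (n+1) * M n)
    (hflat : ∀ n : ℕ, iteratedDerivWithin n φ (Set.Icc (-1) 1) 0 = 0) :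
    ∃ C > (0:ℝ), ∃ c > (0:ℝ), ∃ δ ∈ Set.Ioo (0:ℝ) 1,
      ∀ t : ℝ, 0 < |t| → |t| ≤ δ → ∀ N : ℕ, 1 ≤ N →
        ((¬ Summable (fun j : ℕ => M (N + j - 1) / M (N + j))) ∨
          c * |t| ≤ ∑' j : ℕ, M (N + j - 1) / M (N + j)) →
        |φ t| ≤ C / 2 ^ N := by
  obtain ⟨K, hK, hDC⟩ := hDC
  -- `c` is twice what the chain of intervals requires, so that a partial sum already suffices.
  refine ⟨2 * K, by positivity, 8 * K, by positivity, 1 / 2, by norm_num, ?_⟩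
  intro t ht htd N hN hT
  obtain ⟨N, rfl⟩ : ∃ m, N = m + 1 := ⟨N - 1, by omega⟩
  have hfun : (fun j : ℕ => M (N + 1 + j - 1) / M (N + 1 + j)) =
      fun j => M (N + j) / M (N + j + 1) := by
    funext j
    rw [show N + 1 + j - 1 = N + j by omega, show N + 1 + j = N + j + 1 by ring]
  rw [hfun] at hT
  have hpos : ∀ j, 0 ≤ M (N + j) / M (N + j + 1) := fun j => (div_pos (hMpos _) (hMpos _)).le
  obtain ⟨p, hp⟩ : ∃ p, 4 * K * |t| ≤ ∑ i ∈ Finset.range p, M (N + i) / M (N + i + 1) := by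
    by_cases hs : Summable fun j => M (N + j) / M (N + j + 1)
    · have h1 := hT.resolve_left (not_not.2 hs)
      have h2 : 4 * K * |t| < ∑' j, M (N + j) / M (N + j + 1) := by
        have : 0 < K * |t| := by positivity
        linarith
      obtain ⟨p, hp⟩ := (hs.hasSum.tendsto_sum_nat.eventually (lt_mem_nhds h2)).exists
      exact ⟨p, hp.le⟩
    · have h1 := (not_summable_iff_tendsto_nat_atTop_of_nonneg hpos).1 hs
      exact (h1.eventually_ge_atTop _).exists
  set I := Set.Icc (-1 : ℝ) 1 with hI
  have hu : UniqueDiffOn ℝ I := uniqueDiffOn_Icc (by norm_num)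
  have hder : ∀ n, ∀ x ∈ I, HasDerivWithinAt (iteratedDerivWithin n φ I)
      (iteratedDerivWithin (n + 1) φ I x) I x := by
    intro n x hx
    rw [iteratedDerivWithin_succ]
    exact (hφ.differentiableOn_iteratedDerivWithin
      (by exact_mod_cast WithTop.coe_lt_top n) hu x hx).hasDerivWithinAt
  have hW : ∀ n, 0 < K ^ n * M n := fun n => mul_pos (pow_pos hK n) (hMpos n)
  have hratio : ∀ n, K ^ n * M n / (K ^ (n + 1) * M (n + 1)) = M n / M (n + 1) / K := by
    intro n
    have := hMpos (n + 1)
    field_simp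
    ring
  have hr : Antitone fun n => K ^ n * M n / (K ^ (n + 1) * M (n + 1)) := by
    refine antitone_nat_of_succ_le fun n => ?_
    rw [hratio, hratio]
    refine div_le_div_of_nonneg_right ?_ hK.le
    rw [div_le_div_iff₀ (hMpos _) (hMpos _)]
    have := hlc (n + 1) (by omega)
    simp only [Nat.add_sub_cancel] at this
    nlinarith
  have hsum : |t| ≤ ∑ i ∈ Finset.range p,
      K ^ (N + i) * M (N + i) / (K ^ (N + i + 1) * M (N + i + 1)) / 4 := by
    simp only [hratio]
    rw [← Finset.sum_div, ← Finset.sum_div, div_div, le_div_iff₀ (by positivity)]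
    linarith
  have hsub : Set.Icc (0 : ℝ) 1 ⊆ I := Set.Icc_subset_Icc (by norm_num) le_rfl
  have hneg : ∀ x ∈ Set.Icc (0 : ℝ) 1, -x ∈ I := fun x hx =>
    ⟨by linarith [hx.2], by linarith [hx.1]⟩
  have hfin : |φ t| ≤ K * (2 ^ 0 * (K ^ 0 * M 0)) / 2 ^ N := by
    rcases le_total 0 t with h | h
    · have := bang_chain (fun n => K ^ n * M n) K hK hW hr (fun n => iteratedDerivWithin n φ I)
        (fun n x hx => (hder n x (hsub hx)).mono hsub)
        (fun n x hx => (hDC n x (hsub hx)).trans (by rw [pow_succ]; apply le_of_eq; ring))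
        hflat p N |t| (abs_nonneg t) (by linarith) hsum 0
      simpa [abs_of_nonneg h] using this
    · have := bang_chain (fun n => K ^ n * M n) K hK hW hr
        (fun n x => (-1) ^ n * iteratedDerivWithin n φ I (-x))
        (fun n x hx => by
          have h1 := (hder n (-x) (hneg x hx)).scomp x
            ((hasDerivAt_neg x).hasDerivWithinAt (s := Set.Icc 0 1)) (fun z hz => hneg z hz)
          refine (h1.const_mul ((-1) ^ n)).congr_deriv ?_
          simp [pow_succ])
        (fun n x hx => by
          rw [abs_mul, abs_pow, abs_neg, abs_one, one_pow, one_mul]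
          exact (hDC n (-x) (hneg x hx)).trans (by rw [pow_succ]; apply le_of_eq; ring))
        (fun n => by simp [hflat]) p N |t| (abs_nonneg t) (by linarith) hsum 0
      simpa [abs_of_nonpos h] using this
  calc |φ t| ≤ _ := hfin
    _ = 2 * K / 2 ^ (N + 1) := by rw [hM0, pow_succ 2 N]; field_simp
end

section
/- Let M = (M_n)_{n≥0} be a log-convex positive sequence with M_0 = 1 and μ_n := M_n/M_{n−1}, and assume ∑_{n≥1} 1/μ_n = ∞. If φ belongs to the Denjoy–Carleman class C_M([-1,1]) and is flat at 0 (φ^{(n)}(0) = 0 for all n ≥ 0), then φ ≡ 0 on [-1,1]. -/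
/-!
The argument is Bang's real-variable proof of the Denjoy–Carleman theorem. After absorbing the
constant `K` into the weights, the derivatives `g n = φ⁽ⁿ⁾` satisfy `|g n| ≤ M n`. Measure the size
of the jet at `x` by Bang's norm, and say that `x` has level `N` when
`|g n x| ≤ e⁻ᴺ eⁿ M n` for all `n`. A jet of level `N + 1` at `x` still has level `N` at `x + h` as
long as `0 ≤ h ≤ M N / (e M (N + 1))`: for `n > N` this is the global bound, and for `n ≤ N` one
integrates downwards in `n`, using that `M (n + 1) / M n` is nondecreasing (`bang_step`).

A flat jet has every level at `0`. Starting from a high level there and moving to the right, the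
total distance available before the level drops to `m` is `e⁻¹ ∑_{m ≤ i < m + k} M i / M (i + 1)`,
which exceeds `1` for large `k` by divergence (`bang_chain`). So every point of `[0, 1]` has every
level, and `φ = 0` there. The interval `[-1, 0]` follows by reflection.
-/

/-- Log-convexity makes the ratios `M (n + 1) / M n` nondecreasing. -/
lemma ratio_mono (M : ℕ → ℝ) (hMpos : ∀ n, 0 < M n)
    (hlc : ∀ n : ℕ, 1 ≤ n → M n ^ 2 ≤ M (n-1) * M (n+1)) :
    Monotone (fun n => M (n+1) / M n) := by
  refine monotone_nat_of_le_succ fun n => ?_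
  have h := hlc (n+1) (by omega)
  rw [Nat.add_sub_cancel] at h
  rw [div_le_div_iff₀ (hMpos _) (hMpos _)]
  nlinarith

/-- Moving a distance at most `M N / (e M (N + 1))` to the right costs at most one level. -/
lemma bang_step_s13 (M : ℕ → ℝ) (hMpos : ∀ n, 0 < M n)
    (hmono : Monotone (fun n => M (n+1) / M n)) (g : ℕ → ℝ → ℝ)
    (hg : ∀ n, ∀ t ∈ Set.Icc (0:ℝ) 1, HasDerivWithinAt (g n) (g (n+1) t) (Set.Icc 0 1) t)
    (hb : ∀ n, ∀ t ∈ Set.Icc (0:ℝ) 1, |g n t| ≤ M n)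
    (N : ℕ) (x y : ℝ) (hx : 0 ≤ x) (hxy : x ≤ y) (hy : y ≤ 1)
    (hd : y - x ≤ M N / M (N+1) / Real.exp 1)
    (hP : ∀ n : ℕ, |g n x| ≤ Real.exp (n - (N+1)) * M n) :
    ∀ n : ℕ, |g n y| ≤ Real.exp (n - N) * M n := by
  set r := M (N+1) / M N with hr
  have hr0 : 0 < r := div_pos (hMpos _) (hMpos _)
  -- The downward induction carries a bound growing like `exp (e r (t - x))` along `[x, y]`.
  have key : ∀ k n : ℕ, N + 1 ≤ n + k → ∀ t ∈ Set.Icc x y,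
      |g n t| ≤ Real.exp (n - (N+1)) * M n * Real.exp (Real.exp 1 * r * (t - x)) := by
    intro k
    induction k with
    | zero =>
      intro n hn t ht
      have hn' : (N:ℝ) + 1 ≤ n := by exact_mod_cast hn
      have h1 : 1 ≤ Real.exp (n - (N+1)) := Real.one_le_exp (by linarith)
      have h2 : 1 ≤ Real.exp (Real.exp 1 * r * (t - x)) :=
        Real.one_le_exp (by have := sub_nonneg.2 ht.1; positivity)
      calc |g n t| ≤ M n := hb n t ⟨hx.trans ht.1, ht.2.trans hy⟩
        _ ≤ Real.exp (n - (N+1)) * M n := le_mul_of_one_le_left (hMpos n).le h1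
        _ ≤ _ := le_mul_of_one_le_right (by have := hMpos n; positivity) h2
    | succ k ih =>
      intro n hn
      by_cases hnN : N + 1 ≤ n
      · exact ih n (by omega)
      have hM : M (n+1) ≤ r * M n := by
        have h : M (n+1) / M n ≤ r := hmono (show n ≤ N by omega)
        rwa [div_le_iff₀ (hMpos n)] at h
      have hsub : Set.Icc x y ⊆ Set.Icc 0 1 := Set.Icc_subset_Icc hx hy
      have hB : ∀ t, HasDerivAt
          (fun t => Real.exp (n - (N+1)) * M n * Real.exp (Real.exp 1 * r * (t - x)))
          (Real.exp (n - (N+1)) * M n * (Real.exp (Real.exp 1 * r * (t - x)) *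
            (Real.exp 1 * r * 1))) t := fun t =>
        ((((hasDerivAt_id t).sub_const x).const_mul _).exp).const_mul _
      refine image_norm_le_of_norm_deriv_right_le_deriv_boundary
        (f := g n) (f' := g (n+1))
        (fun t ht => (hg n t (hsub ht)).continuousWithinAt.mono hsub) (fun t ht => ?_) ?_ hB ?_
      · refine (hg n t (hsub ⟨ht.1, ht.2.le⟩)).mono_of_mem_nhdsWithin ?_
        refine Filter.mem_of_superset (Icc_mem_nhdsGE ht.2) ?_
        exact Set.Icc_subset_Icc (hx.trans ht.1) hy
      · simpa using hP n
      · intro t ht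
        refine (ih (n+1) (by omega) t ⟨ht.1, ht.2.le⟩).trans ?_
        have he : Real.exp (((n+1 : ℕ):ℝ) - (N+1)) = Real.exp (n - (N+1)) * Real.exp 1 := by
          rw [← Real.exp_add]; push_cast; ring_nf
        rw [he]
        calc _ = (Real.exp (n - (N+1)) * Real.exp 1 * Real.exp (Real.exp 1 * r * (t - x)))
                  * M (n+1) := by ring
          _ ≤ (Real.exp (n - (N+1)) * Real.exp 1 * Real.exp (Real.exp 1 * r * (t - x)))
                  * (r * M n) := by gcongr
          _ = _ := by ring
  intro n
  refine (key (N+1) n (by omega) y ⟨hxy, le_rfl⟩).trans ?_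
  have h1 : Real.exp 1 * r * (y - x) ≤ 1 := by
    calc Real.exp 1 * r * (y - x) ≤ Real.exp 1 * r * (M N / M (N+1) / Real.exp 1) := by gcongr
      _ = 1 := by
        have := hMpos N
        have := hMpos (N+1)
        rw [hr]; field_simp
  calc _ ≤ Real.exp (n - (N+1)) * M n * Real.exp 1 := by
        have := hMpos n
        gcongr
    _ = Real.exp (n - (N+1)) * Real.exp 1 * M n := by ring
    _ = _ := by rw [← Real.exp_add]; ring_nf

/-- Level `m` persists on `[0, 1]` up to the total length of the `k` steps from level `m + k`
down to level `m`. -/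
lemma bang_chain_s13 (M : ℕ → ℝ) (hMpos : ∀ n, 0 < M n)
    (hmono : Monotone (fun n => M (n+1) / M n)) (g : ℕ → ℝ → ℝ)
    (hg : ∀ n, ∀ t ∈ Set.Icc (0:ℝ) 1, HasDerivWithinAt (g n) (g (n+1) t) (Set.Icc 0 1) t)
    (hb : ∀ n, ∀ t ∈ Set.Icc (0:ℝ) 1, |g n t| ≤ M n)
    (hflat : ∀ n, g n 0 = 0) (k : ℕ) :
    ∀ m : ℕ, ∀ x ∈ Set.Icc (0:ℝ) 1,
      x ≤ ∑ i ∈ Finset.range k, M (i+m) / M (i+m+1) / Real.exp 1 →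
      ∀ n : ℕ, |g n x| ≤ Real.exp (n - m) * M n := by
  induction k with
  | zero =>
    intro m x hx hs n
    have h0 : x = 0 := le_antisymm (by simpa using hs) hx.1
    rw [h0, hflat, abs_zero]
    have := hMpos n
    positivity
  | succ k ih =>
    intro m x hx hs
    rw [Finset.sum_range_succ', Nat.zero_add] at hs
    set d := M m / M (m+1) / Real.exp 1 with hd
    have hd0 : 0 ≤ d := by
      have := hMpos m
      have := hMpos (m+1)
      positivity
    have hyx : max 0 (x - d) ≤ x := max_le hx.1 (by linarith)
    refine bang_step_s13 M hMpos hmono g hg hb m (max 0 (x - d)) x (le_max_left _ _) hyx hx.2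
      (by linarith [le_max_right 0 (x - d)]) fun n => ?_
    have h := ih (m+1) (max 0 (x - d)) ⟨le_max_left _ _, hyx.trans hx.2⟩ ?_ n
    · push_cast at h
      exact h
    · have hs' : x - d ≤ ∑ i ∈ Finset.range k, M (i+(m+1)) / M (i+(m+1)+1) / Real.exp 1 := by
        simp only [show ∀ i, i + 1 + m = i + (m + 1) by intro i; omega] at hs
        linarith
      refine max_le (Finset.sum_nonneg fun i _ => ?_) hs'
      have := hMpos (i+(m+1))
      have := hMpos (i+(m+1)+1)
      positivity

/-- One-sided quasianalyticity for a sequence `g` of successive derivatives on `[0, 1]`. -/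
lemma bang_zero (M : ℕ → ℝ) (hMpos : ∀ n, 0 < M n)
    (hmono : Monotone (fun n => M (n+1) / M n))
    (hqa : ¬ Summable (fun n : ℕ => M n / M (n+1))) (g : ℕ → ℝ → ℝ)
    (hg : ∀ n, ∀ t ∈ Set.Icc (0:ℝ) 1, HasDerivWithinAt (g n) (g (n+1) t) (Set.Icc 0 1) t)
    (hb : ∀ n, ∀ t ∈ Set.Icc (0:ℝ) 1, |g n t| ≤ M n)
    (hflat : ∀ n, g n 0 = 0) : ∀ t ∈ Set.Icc (0:ℝ) 1, g 0 t = 0 := by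
  intro t ht
  have hm : ∀ m : ℕ, |g 0 t| ≤ Real.exp (-m) * M 0 := by
    intro m
    have hns : ¬ Summable (fun i : ℕ => M (i+m) / M (i+m+1) / Real.exp 1) := by
      intro h
      refine hqa ((summable_nat_add_iff m).1 ((h.mul_right (Real.exp 1)).congr fun i => ?_))
      exact div_mul_cancel₀ _ (Real.exp_pos 1).ne'
    rw [not_summable_iff_tendsto_nat_atTop_of_nonneg (fun i =>
      div_nonneg (div_pos (hMpos _) (hMpos _)).le (Real.exp_pos 1).le)] at hns
    obtain ⟨k, hk⟩ := (hns.eventually_ge_atTop t).exists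
    simpa using bang_chain_s13 M hMpos hmono g hg hb hflat k m t ht hk 0
  have hlim : Filter.Tendsto (fun m : ℕ => Real.exp (-m) * M 0) Filter.atTop (nhds (0 * M 0)) :=
    (Real.tendsto_exp_neg_atTop_nhds_zero.comp tendsto_natCast_atTop_atTop).mul_const _
  rw [zero_mul] at hlim
  exact abs_nonpos_iff.1 (ge_of_tendsto' hlim hm)

theorem stmt_13 (M : ℕ → ℝ) (hMpos : ∀ n, 0 < M n) (hM0 : M 0 = 1)
    (hlc : ∀ n : ℕ, 1 ≤ n → M n ^ 2 ≤ M (n-1) * M (n+1))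
    (hqa : ¬ Summable (fun n : ℕ => M n / M (n+1)))
    (φ : ℝ → ℝ) (hφ : ContDiffOn ℝ (⊤ : ℕ∞) φ (Set.Icc (-1) 1))
    (hDC : ∃ K > (0:ℝ), ∀ n : ℕ, ∀ t ∈ Set.Icc (-1:ℝ) 1,
      |iteratedDerivWithin n φ (Set.Icc (-1) 1) t| ≤ K ^ (n+1) * M n)
    (hflat : ∀ n : ℕ, iteratedDerivWithin n φ (Set.Icc (-1) 1) 0 = 0) :
    ∀ t ∈ Set.Icc (-1:ℝ) 1, φ t = 0 := by
  obtain ⟨K, hK, hb⟩ := hDC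
  set G : ℕ → ℝ → ℝ := fun n => iteratedDerivWithin n φ (Set.Icc (-1) 1) with hG
  have hder : ∀ n, ∀ t ∈ Set.Icc (-1:ℝ) 1,
      HasDerivWithinAt (G n) (G (n+1) t) (Set.Icc (-1) 1) t := by
    intro n t ht
    have hd : DifferentiableOn ℝ (G n) (Set.Icc (-1) 1) :=
      hφ.differentiableOn_iteratedDerivWithin (by exact_mod_cast ENat.natCast_lt_top n)
        (uniqueDiffOn_Icc (by norm_num))
    have h := (hd t ht).hasDerivWithinAt
    rwa [← iteratedDerivWithin_succ] at h
  set W : ℕ → ℝ := fun n => K ^ (n+1) * M n with hW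
  have hWpos : ∀ n, 0 < W n := fun n => mul_pos (pow_pos hK _) (hMpos n)
  have hWratio : ∀ n, W (n+1) / W n = K * (M (n+1) / M n) := by
    intro n
    have := (hMpos n).ne'
    simp only [hW]
    field_simp
    ring
  have hWmono : Monotone (fun n => W (n+1) / W n) := by
    simp only [hWratio]
    exact (ratio_mono M hMpos hlc).const_mul hK.le
  have hWqa : ¬ Summable (fun n : ℕ => W n / W (n+1)) := by
    intro h
    refine hqa ((h.mul_right K).congr fun n => ?_)
    rw [← inv_div, hWratio, mul_inv, inv_div]
    field_simp
  have hsub : Set.Icc (0:ℝ) 1 ⊆ Set.Icc (-1) 1 := Set.Icc_subset_Icc (by norm_num) le_rfl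
  have hneg : ∀ t ∈ Set.Icc (0:ℝ) 1, -t ∈ Set.Icc (-1:ℝ) 1 := fun t ht =>
    ⟨by linarith [ht.2], by linarith [ht.1]⟩
  have hG0 : ∀ t, G 0 t = φ t := fun t => by simp [hG]
  intro t ht
  rcases le_total 0 t with h0 | h0
  · rw [← hG0]
    exact bang_zero W hWpos hWmono hWqa G (fun n s hs => (hder n s (hsub hs)).mono hsub)
      (fun n s hs => hb n s (hsub hs)) hflat t ⟨h0, ht.2⟩
  · have h := bang_zero W hWpos hWmono hWqa (fun n s => (-1) ^ n * G n (-s)) (fun n s hs => ?_)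
      (fun n s hs => ?_) (fun n => ?_) (-t) ⟨by linarith, by linarith [ht.1]⟩
    · simpa [hG0] using h
    · have h := ((hder n (-s) (hneg s hs)).comp s ((hasDerivAt_neg s).hasDerivWithinAt) hneg
        ).const_mul ((-1:ℝ) ^ n)
      refine h.congr_deriv ?_
      ring
    · simpa [abs_mul] using hb n (-s) (hneg s hs)
    · simpa using hflat n
end

section
/- (Flat-point estimate beyond Gevrey) Let α > 1 and c > 0, and let φ be a C^∞ function on [-1,1] that is flat at 0 (φ^{(n)}(0) = 0 for all n ≥ 0) and satisfies, for some K > 0, sup_{t∈[-1,1]} |φ^{(n)}(t)| ≤ K^{n+1}·exp(c·n^α) for all n ≥ 0. Then there exist constants A, B > 0 and δ ∈ (0,1) such that |φ(t)| ≤ A·exp(−B·(log(1/|t|))^{α/(α−1)}) for all t with 0 < |t| ≤ δ. -/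
/-!
Because all derivatives vanish at `0`, integrating the bound on the `n`-th derivative `n` times
(`abs_le_mul_pow_of_flat`, an induction on the mean value inequality; the factor `1 / n!` of
Taylor's formula is not needed) gives `|φ t| ≤ K (K |t|) ^ n exp (c n ^ α)` for *every* `n`.

Write `L = log (1 / |t|)`. When `L ≥ 2 log K` the right side is at most
`K exp (c n ^ α - n L / 2)`, and `n` is taken to be the integer part of the point
`x = (L / (4 c)) ^ (1 / (α - 1))`. Then `c n ^ (α - 1) ≤ L / 4`, so the exponent is at most
`-n L / 4 ≤ -x L / 8`, which is a negative multiple of `L ^ (α / (α - 1))`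
(`exists_nat_exponent_le`).
-/

/-- A bound `M` on the derivative of order `k + m` of a function flat at `0` yields the bound
`M |t| ^ m` on the derivative of order `k`. -/
lemma abs_le_mul_pow_of_flat (φ : ℝ → ℝ) (hφ : ContDiffOn ℝ (⊤ : ℕ∞) φ (Set.Icc (-1) 1))
    (hflat : ∀ n : ℕ, iteratedDerivWithin n φ (Set.Icc (-1) 1) 0 = 0) (M : ℝ) (m : ℕ) :
    ∀ k : ℕ, (∀ t ∈ Set.Icc (-1:ℝ) 1, |iteratedDerivWithin (k + m) φ (Set.Icc (-1) 1) t| ≤ M) →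
      ∀ t ∈ Set.Icc (-1:ℝ) 1, |iteratedDerivWithin k φ (Set.Icc (-1) 1) t| ≤ M * |t| ^ m := by
  have h0 : (0:ℝ) ∈ Set.Icc (-1:ℝ) 1 := by norm_num
  induction m with
  | zero => intro k h t ht; simpa using h t ht
  | succ m ih =>
    intro k h t ht
    have hM : 0 ≤ M := (abs_nonneg _).trans (h 0 h0)
    have hk := ih (k + 1) (by rwa [add_right_comm, add_assoc])
    have hsub : Set.uIcc 0 t ⊆ Set.Icc (-1:ℝ) 1 := Set.uIcc_subset_Icc h0 ht
    have hu : UniqueDiffOn ℝ (Set.Icc (-1:ℝ) 1) := uniqueDiffOn_Icc (by norm_num)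
    have hd : DifferentiableOn ℝ (iteratedDerivWithin k φ (Set.Icc (-1) 1)) (Set.Icc (-1) 1) :=
      hφ.differentiableOn_iteratedDerivWithin (by exact_mod_cast ENat.natCast_lt_top k) hu
    have key := Convex.norm_image_sub_le_of_norm_hasDerivWithin_le
      (f := iteratedDerivWithin k φ (Set.Icc (-1) 1))
      (f' := iteratedDerivWithin (k + 1) φ (Set.Icc (-1) 1)) (s := Set.uIcc 0 t)
      (x := 0) (y := t) (C := M * |t| ^ m)
      (fun s hs => by
        rw [iteratedDerivWithin_succ]
        exact ((hd s (hsub hs)).hasDerivWithinAt).mono hsub)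
      (fun s hs => by
        have hst : |s| ≤ |t| := by simpa using Set.abs_sub_left_of_mem_uIcc hs
        refine (hk s (hsub hs)).trans ?_
        gcongr)
      (convex_uIcc 0 t) Set.left_mem_uIcc Set.right_mem_uIcc
    simpa [hflat, pow_succ, mul_assoc] using key

/-- The minimum over `n : ℕ` of `c n ^ α - n L / 2` is at most a negative multiple of
`L ^ (α / (α - 1))`; the condition `4 c ≤ L` makes the near-optimal `n` at least `1`. -/
lemma exists_nat_exponent_le (α c L : ℝ) (hα : 1 < α) (hc : 0 < c) (hL : 4 * c ≤ L) :
    ∃ n : ℕ, c * (n:ℝ) ^ α - n * L / 2 ≤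
      -((4 * c) ^ (-(1 / (α - 1))) / 8) * L ^ (α / (α - 1)) := by
  have ha : 0 < α - 1 := by linarith
  have hL0 : 0 < L := by linarith
  set x : ℝ := (L / (4 * c)) ^ (1 / (α - 1)) with hx
  have hx1 : 1 ≤ x := Real.one_le_rpow ((one_le_div (by positivity)).2 hL) (by positivity)
  have hxpow : x ^ (α - 1) = L / (4 * c) := by
    rw [hx, ← Real.rpow_mul (by positivity), one_div_mul_cancel ha.ne', Real.rpow_one]
  have hxL : (4 * c) ^ (-(1 / (α - 1))) * L ^ (α / (α - 1)) = x * L := by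
    have : α / (α - 1) = 1 / (α - 1) + 1 := by field_simp; ring
    rw [this, Real.rpow_add hL0, Real.rpow_one, hx, Real.div_rpow hL0.le (by positivity),
      Real.rpow_neg (by positivity)]
    ring
  have hn1 : (1:ℝ) ≤ (⌊x⌋₊ : ℝ) := by exact_mod_cast (Nat.one_le_floor_iff x).2 hx1
  have hnx : (⌊x⌋₊ : ℝ) ≤ x := Nat.floor_le (by linarith)
  have hxn : x < ⌊x⌋₊ + 1 := Nat.lt_floor_add_one x
  refine ⟨⌊x⌋₊, ?_⟩
  generalize (⌊x⌋₊ : ℝ) = n at *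
  have hpow : n ^ α ≤ n * (L / (4 * c)) := by
    have h1 : n ^ α = n * n ^ (α - 1) := by
      rw [Real.rpow_sub_one (by linarith)]; field_simp
    rw [h1, ← hxpow]
    gcongr
  have h2 : c * n ^ α ≤ n * L / 4 := by
    calc c * n ^ α ≤ c * (n * (L / (4 * c))) := by gcongr
      _ = n * L / 4 := by field_simp
  have h3 : x * L ≤ 2 * n * L := by gcongr; linarith
  have h4 : -((4 * c) ^ (-(1 / (α - 1))) / 8) * L ^ (α / (α - 1)) = -(x * L) / 8 := by
    rw [← hxL]; ring
  rw [h4]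
  linarith

theorem stmt_17 (α : ℝ) (hα : 1 < α) (c : ℝ) (hc : 0 < c)
    (φ : ℝ → ℝ) (hφ : ContDiffOn ℝ (⊤ : ℕ∞) φ (Set.Icc (-1) 1))
    (hDC : ∃ K > (0:ℝ), ∀ n : ℕ, ∀ t ∈ Set.Icc (-1:ℝ) 1,
      |iteratedDerivWithin n φ (Set.Icc (-1) 1) t| ≤ K ^ (n+1) * Real.exp (c * (n:ℝ) ^ α))
    (hflat : ∀ n : ℕ, iteratedDerivWithin n φ (Set.Icc (-1) 1) 0 = 0) :
    ∃ A > (0:ℝ), ∃ B > (0:ℝ), ∃ δ ∈ Set.Ioo (0:ℝ) 1,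
      ∀ t : ℝ, 0 < |t| → |t| ≤ δ →
        |φ t| ≤ A * Real.exp (-B * (Real.log (1/|t|)) ^ (α/(α-1))) := by
  obtain ⟨K, hK, hDC⟩ := hDC
  -- This `δ` forces `log (1 / |t|)` to exceed both `4 * c` and `2 * log K`.
  refine ⟨K, hK, (4 * c) ^ (-(1 / (α - 1))) / 8, by positivity,
    Real.exp (-(4 * c + 2 * |Real.log K|)), ⟨Real.exp_pos _, ?_⟩, ?_⟩
  · rw [Real.exp_lt_one_iff]
    have := abs_nonneg (Real.log K)
    linarith
  intro t ht htδ
  set L := Real.log (1 / |t|) with hLdef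
  have hlog : Real.log |t| = -L := by rw [hLdef, one_div, Real.log_inv, neg_neg]
  have hL : 4 * c + 2 * |Real.log K| ≤ L := by
    have := (Real.log_le_iff_le_exp ht).2 htδ
    linarith
  have hK0 := abs_nonneg (Real.log K)
  have hK1 := le_abs_self (Real.log K)
  have ht1 : |t| ≤ 1 := htδ.trans (Real.exp_le_one_iff.2 (by linarith))
  obtain ⟨n, hn⟩ := exists_nat_exponent_le α c L hα hc (by linarith)
  have hb := abs_le_mul_pow_of_flat φ hφ hflat _ n 0 (by simpa using hDC n) t (abs_le.1 ht1)
  rw [iteratedDerivWithin_zero] at hb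
  have hKt : K * |t| ≤ Real.exp (-(L / 2)) := by
    rw [← Real.log_le_iff_le_exp (by positivity), Real.log_mul hK.ne' ht.ne', hlog]
    linarith
  calc |φ t| ≤ K ^ (n + 1) * Real.exp (c * (n:ℝ) ^ α) * |t| ^ n := hb
    _ = K * ((K * |t|) ^ n * Real.exp (c * (n:ℝ) ^ α)) := by ring
    _ ≤ K * (Real.exp (-(L / 2)) ^ n * Real.exp (c * (n:ℝ) ^ α)) := by gcongr
    _ = K * Real.exp (c * (n:ℝ) ^ α - n * L / 2) := by
      rw [← Real.exp_nat_mul, ← Real.exp_add]; congr 2; ring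
    _ ≤ _ := by gcongr
end

section
/- (Flat-point estimate for iterated-exponential classes) Let k ≥ 2 be an integer, α > 0 and c > 0, and let φ be a C^∞ function on [-1,1] that is flat at 0 (φ^{(n)}(0) = 0 for all n ≥ 0) and satisfies, for some K > 0, sup_{t∈[-1,1]} |φ^{(n)}(t)| ≤ K^{n+1}·E_k(c·n^α) for all n ≥ 0, where E_k is the k-fold iterated exponential. Then there exist constants A, B > 0 and δ ∈ (0,1) such that |φ(t)| ≤ A·exp(−B·log(1/|t|)·(log^{(k)}(1/|t|))^{1/α}) for all t with 0 < |t| ≤ δ. -/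
/-!
Since `φ` is flat at `0`, applying the mean value inequality `m` times gives
`|φ t| ≤ |t| ^ m * sup |φ^{(m)}|` (`abs_le_of_flat`; the factor `1 / m!` of Taylor's formula is not
needed).  Hence `|φ t| ≤ K ^ (m + 1) * E_k (c * m ^ α) * |t| ^ m` for every `m`.  Choose
`m = ⌊(log^{(k)} (1 / |t|) / c) ^ (1 / α)⌋`, so that `E_k (c * m ^ α) ≤ 1 / |t|`, because `E_k` is
monotone and inverts `log^{(k)}` near infinity (`eventually_iterExp_iterLog`).  With
`L = log (1 / |t|)` what remains is `K ^ (m + 1) * exp (-(m - 1) * L)`, and this is at most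
`exp (-m * L / 4)` once `L ≥ 8 * log K` and `m ≥ 2`.
-/

/-- `iterLog k` is the `k`-fold iterated natural logarithm. -/
noncomputable def iterLog : ℕ → ℝ → ℝ
  | 0, x => x
  | (k+1), x => Real.log (iterLog k x)

/-- `iterExp k` is the `k`-fold iterated exponential (`iterExp 1 x = e^x`). -/
noncomputable def iterExp : ℕ → ℝ → ℝ
  | 0, x => x
  | (k+1), x => Real.exp (iterExp k x)

open Filter Set

lemma iterExp_mono (k : ℕ) : Monotone (iterExp k) := by
  induction k with
  | zero => exact fun _ _ h => h
  | succ k ih => exact fun _ _ h => Real.exp_le_exp.2 (ih h)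

/-- The recursion defining `iterExp` adds the new exponential on the outside; this is the
version with the new exponential on the inside. -/
lemma iterExp_succ' (k : ℕ) (x : ℝ) : iterExp (k + 1) x = iterExp k (Real.exp x) := by
  induction k with
  | zero => rfl
  | succ k ih => exact congrArg Real.exp ih

lemma tendsto_iterLog (k : ℕ) : Tendsto (iterLog k) atTop atTop := by
  induction k with
  | zero => exact tendsto_id
  | succ k ih => exact Real.tendsto_log_atTop.comp ih

lemma eventually_iterExp_iterLog (k : ℕ) : ∀ᶠ x in atTop, iterExp k (iterLog k x) = x := by
  induction k with
  | zero => exact Eventually.of_forall fun _ => rfl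
  | succ k ih =>
    filter_upwards [ih, (tendsto_iterLog k).eventually_gt_atTop 0] with x hx hpos
    rw [iterExp_succ', iterLog, Real.exp_log hpos, hx]

/-- Crude Taylor bound at a flat point.  The order `j` of the starting derivative is free so that
the induction on `m` can pass from `j` to `j + 1`. -/
lemma abs_le_of_flat {φ : ℝ → ℝ} (hφ : ContDiffOn ℝ (⊤ : ℕ∞) φ (Icc (-1) 1))
    (hflat : ∀ n : ℕ, iteratedDerivWithin n φ (Icc (-1) 1) 0 = 0) (M : ℝ) (m : ℕ) :
    ∀ j : ℕ, (∀ t ∈ Icc (-1 : ℝ) 1, |iteratedDerivWithin (j + m) φ (Icc (-1) 1) t| ≤ M) →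
      ∀ t ∈ Icc (-1 : ℝ) 1, |iteratedDerivWithin j φ (Icc (-1) 1) t| ≤ M * |t| ^ m := by
  induction m with
  | zero => intro j h t ht; simpa using h t ht
  | succ m ih =>
    intro j h t ht
    have hM : 0 ≤ M := (abs_nonneg _).trans (h t ht)
    have ih' := ih (j + 1) (by simpa [add_assoc, add_comm 1 m] using h)
    have hsub : Icc (-|t|) |t| ⊆ Icc (-1 : ℝ) 1 := by
      have := abs_le.2 ht
      exact Icc_subset_Icc (by linarith) this
    have hu : UniqueDiffOn ℝ (Icc (-1 : ℝ) 1) := uniqueDiffOn_Icc (by norm_num)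
    have hd : ∀ s ∈ Icc (-|t|) |t|, HasDerivWithinAt (iteratedDerivWithin j φ (Icc (-1) 1))
        (iteratedDerivWithin (j + 1) φ (Icc (-1) 1) s) (Icc (-|t|) |t|) s := by
      intro s hs
      rw [iteratedDerivWithin_succ]
      have hlt : ((j : ℕ∞) : WithTop ℕ∞) < ((⊤ : ℕ∞) : WithTop ℕ∞) := by
        exact_mod_cast ENat.natCast_lt_top j
      exact ((hφ.differentiableOn_iteratedDerivWithin hlt hu) s
        (hsub hs)).hasDerivWithinAt.mono hsub
    have key := (convex_Icc (-|t|) |t|).norm_image_sub_le_of_norm_hasDerivWithin_le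
      (C := M * |t| ^ m) hd (fun s hs => by
        have hs' : |s| ≤ |t| := abs_le.2 hs
        rw [Real.norm_eq_abs]
        exact (ih' s (hsub hs)).trans (by gcongr))
      (x := 0) (y := t) ⟨by simp, by simp⟩ ⟨neg_abs_le t, le_abs_self t⟩
    rw [hflat j, sub_zero, sub_zero, Real.norm_eq_abs, Real.norm_eq_abs] at key
    rw [pow_succ, ← mul_assoc]
    exact key

theorem stmt_19 (k : ℕ) (hk : 2 ≤ k) (α : ℝ) (hα : 0 < α) (c : ℝ) (hc : 0 < c)
    (φ : ℝ → ℝ) (hφ : ContDiffOn ℝ (⊤ : ℕ∞) φ (Set.Icc (-1) 1))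
    (hDC : ∃ K > (0:ℝ), ∀ n : ℕ, ∀ t ∈ Set.Icc (-1:ℝ) 1,
      |iteratedDerivWithin n φ (Set.Icc (-1) 1) t| ≤ K ^ (n+1) * iterExp k (c * (n:ℝ) ^ α))
    (hflat : ∀ n : ℕ, iteratedDerivWithin n φ (Set.Icc (-1) 1) 0 = 0) :
    ∃ A > (0:ℝ), ∃ B > (0:ℝ), ∃ δ ∈ Set.Ioo (0:ℝ) 1,
      ∀ t : ℝ, 0 < |t| → |t| ≤ δ →
        |φ t| ≤ A * Real.exp (-B * Real.log (1/|t|) * (iterLog k (1/|t|)) ^ (1/α)) := by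
  obtain ⟨K, hK, hDC⟩ := hDC
  have hq : 0 < c ^ (1 / α) := Real.rpow_pos_of_pos hc _
  have hroot : Tendsto (fun u => (iterLog k u / c) ^ (1 / α)) atTop atTop :=
    (tendsto_rpow_atTop (by positivity)).comp ((tendsto_iterLog k).atTop_div_const hc)
  obtain ⟨U, hU⟩ := eventually_atTop.1
    ((eventually_iterExp_iterLog k).and
      (((tendsto_iterLog k).eventually_gt_atTop 0).and
        ((hroot.eventually_ge_atTop 3).and
          ((Real.tendsto_log_atTop.eventually_ge_atTop (8 * Real.log K)).and
            (Real.tendsto_log_atTop.eventually_ge_atTop 0)))))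
  refine ⟨1, one_pos, 1 / (8 * c ^ (1 / α)), by positivity, 1 / (|U| + 2),
    ⟨by positivity, ?_⟩, ?_⟩
  · rw [div_lt_one (by positivity)]
    linarith [abs_nonneg U]
  intro t ht0 htδ
  have hU2 : 0 < |U| + 2 := by positivity
  have htu : |U| + 2 ≤ 1 / |t| := (le_one_div hU2 ht0).2 htδ
  have ht1 : |t| ≤ 1 := htδ.trans (by
    rw [div_le_one hU2]
    linarith [abs_nonneg U])
  obtain ⟨hinv, hpos, hx3, hLK, hL0⟩ := hU (1 / |t|) (by linarith [le_abs_self U])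
  set L := Real.log (1 / |t|) with hL
  set x := (iterLog k (1 / |t|) / c) ^ (1 / α) with hx
  have hx0 : 0 ≤ x := by linarith
  set m := ⌊x⌋₊ with hm
  have hmx : (m : ℝ) ≤ x := Nat.floor_le hx0
  have hxm : x < m + 1 := Nat.lt_floor_add_one x
  have hxα : x ^ α = iterLog k (1 / |t|) / c := by
    rw [hx, one_div α, Real.rpow_inv_rpow (by positivity) hα.ne']
  have hE : iterExp k (c * (m : ℝ) ^ α) ≤ Real.exp L := by
    rw [hL, Real.exp_log (by positivity)]
    calc iterExp k (c * (m : ℝ) ^ α) ≤ iterExp k (iterLog k (1 / |t|)) := by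
          apply iterExp_mono
          calc c * (m : ℝ) ^ α ≤ c * x ^ α := by gcongr
            _ = _ := by rw [hxα]; field_simp
      _ = _ := hinv
  have hKe : K ^ (m + 1) = Real.exp ((m + 1) * Real.log K) := by
    rw [← Nat.cast_succ, Real.exp_nat_mul, Real.exp_log hK]
  have hte : |t| ^ m = Real.exp (m * -L) := by
    rw [Real.exp_nat_mul, hL, one_div, Real.log_inv, neg_neg, Real.exp_log ht0]
  have hm2 : (2 : ℝ) ≤ m := by
    exact_mod_cast Nat.le_floor (show ((2 : ℕ) : ℝ) ≤ x by push_cast; linarith)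
  have hxroot : (iterLog k (1 / |t|)) ^ (1 / α) = x * c ^ (1 / α) := by
    rw [hx, Real.div_rpow hpos.le hc.le]
    field_simp
  have hT := abs_le_of_flat hφ hflat _ m 0 (fun s hs => by
    rw [zero_add]; exact hDC m s hs) t (abs_le.1 ht1)
  rw [iteratedDerivWithin_zero] at hT
  calc |φ t| ≤ K ^ (m + 1) * iterExp k (c * (m : ℝ) ^ α) * |t| ^ m := hT
    _ ≤ K ^ (m + 1) * Real.exp L * |t| ^ m := by gcongr
    _ = Real.exp ((m + 1) * Real.log K + L + m * -L) := by
      rw [hKe, hte, Real.exp_add, Real.exp_add]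
    _ ≤ Real.exp (-(L * x / 8)) := by
      apply Real.exp_le_exp.2
      have h1 : ((m : ℝ) + 1) * (8 * Real.log K) ≤ (m + 1) * L := by gcongr
      have h2 : L * x ≤ L * (m + 1) := by gcongr
      have h3 : L * 2 ≤ L * m := by gcongr
      linarith
    _ = _ := by
      rw [hxroot, one_mul]
      congr 1
      field_simp
end
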